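/- Let $\alpha_1,\alpha_2>0$ and set $J(s)=e^{-\alpha_2 s}\int_0^s e^{\alpha_2 v}\big(\int_{-\infty}^0 e^{\alpha_1 u}(v-u)^{-1}\,du\big)dv$ for $s>0$. Then for every $N\in\mathbb{N}$, as $s\to+\infty$, $J(s)=\frac{1}{\alpha_1\alpha_2}\,s^{-1}+\frac{1}{\alpha_1+\alpha_2}\sum_{n=1}^{N}\Big(\frac{(-1)^n}{\alpha_2^{\,n+1}}+\frac{1}{\alpha_1^{\,n+1}}\Big)(-1)^n\,n!\;s^{-1-n}+O\big(s^{-N-2}\big)$. -/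

import Mathlib

open MeasureTheory Filter Asymptotics Topology Real

/-!
Substituting `t = -u`, the inner integral is the Stieltjes transform `G` of `t ↦ e ^ (-α₁ t)`, whose
expansion in powers of `v⁻¹` has the moments `n! / α₁ ^ (n + 1)` with alternating signs as
coefficients. The function `J` solves the linear equation `y' = G - α₂ y`. The finite sum
`P s = ∑ c n * s⁻¹ ^ (n + 1)` solves it up to `O(s⁻¹ ^ (N + 2))` as soon as the `c n` satisfy the
recursion obtained by comparing coefficients, and since the equation is exponentially damped,
`J - P` is then of the same order as this residual.
-/

section DampedEquation

variable {E : Type*} [NormedAddCommGroup E] [NormedSpace ℝ E]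

lemma norm_le_of_hasDerivAt_sub_smul {b s₀ s : ℝ} {y r : ℝ → E} {g g' : ℝ → ℝ} (hs : s₀ ≤ s)
    (hy : ∀ x, s₀ ≤ x → HasDerivAt y (r x - b • y x) x)
    (hg : ∀ x, s₀ ≤ x → HasDerivAt g (g' x) x)
    (hr : ∀ x, s₀ ≤ x → ‖r x‖ ≤ g' x + b * g x) (h₀ : ‖y s₀‖ ≤ g s₀) :
    ‖y s‖ ≤ g s := by
  -- The integrating factor removes the zeroth-order term, so that derivatives can be compared.
  have hexp (x : ℝ) : HasDerivAt (fun x ↦ exp (b * x)) (exp (b * x) * b) x := by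
    simpa using ((hasDerivAt_id x).const_mul b).exp
  have hy_exp (x : ℝ) (hx : s₀ ≤ x) :
      HasDerivAt (fun x ↦ exp (b * x) • y x) (exp (b * x) • r x) x :=
    ((hexp x).smul (hy x hx)).congr_deriv (by module)
  have hg_exp (x : ℝ) (hx : s₀ ≤ x) :
      HasDerivAt (fun x ↦ exp (b * x) * g x) (exp (b * x) * (g' x + b * g x)) x :=
    ((hexp x).mul (hg x hx)).congr_deriv (by ring)
  have hle : ‖exp (b * s) • y s‖ ≤ exp (b * s) * g s := by
    refine image_norm_le_of_norm_deriv_right_le_deriv_boundary'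
      (fun x hx ↦ (hy_exp x hx.1).continuousAt.continuousWithinAt)
      (fun x hx ↦ (hy_exp x hx.1).hasDerivWithinAt) ?_
      (fun x hx ↦ (hg_exp x hx.1).continuousAt.continuousWithinAt)
      (fun x hx ↦ (hg_exp x hx.1).hasDerivWithinAt) (fun x hx ↦ ?_) ⟨hs, le_rfl⟩
    · rw [norm_smul, norm_of_nonneg (exp_pos _).le]
      gcongr
    · rw [norm_smul, norm_of_nonneg (exp_pos _).le]
      gcongr
      exact hr x hx.1
  rw [norm_smul, norm_of_nonneg (exp_pos _).le] at hle
  exact le_of_mul_le_mul_left hle (exp_pos _)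

lemma isBigO_of_hasDerivAt_sub_smul {b : ℝ} (hb : 0 < b) {y r : ℝ → E} {g g' : ℝ → ℝ}
    (hy : ∀ᶠ s in atTop, HasDerivAt y (r s - b • y s) s)
    (hg : ∀ᶠ s in atTop, HasDerivAt g (g' s) s) (hg_pos : ∀ᶠ s in atTop, 0 < g s)
    (hg' : g' =o[atTop] g) (hr : r =O[atTop] g) : y =O[atTop] g := by
  obtain ⟨C, hC, hrC⟩ := hr.exists_pos
  obtain ⟨s₀, hs₀⟩ := eventually_atTop.1 <|
    hy.and <| hg.and <| hg_pos.and <| (hg'.bound (half_pos hb)).and hrC.bound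
  choose hy hg hg_pos hg' hrC using hs₀
  set K : ℝ := max (2 * C / b) (‖y s₀‖ / g s₀)
  refine IsBigO.of_bound K ?_
  filter_upwards [eventually_ge_atTop s₀] with s hs
  rw [norm_of_nonneg (hg_pos s hs).le]
  refine norm_le_of_hasDerivAt_sub_smul hs hy (fun x hx ↦ (hg x hx).const_mul K) (fun x hx ↦ ?_) ?_
  · have hg_half : b / 2 * g x ≤ g' x + b * g x := by
      have := (abs_le.1 (hg' x hx)).1
      rw [norm_of_nonneg (hg_pos x hx).le] at this
      linarith
    have hCK : C ≤ K * (b / 2) := by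
      have := (div_le_iff₀ hb).1 (le_max_left (2 * C / b) (‖y s₀‖ / g s₀))
      linarith
    have : 0 ≤ K := le_max_of_le_left (by positivity)
    calc ‖r x‖ ≤ C * g x := by simpa only [norm_of_nonneg (hg_pos x hx).le] using hrC x hx
      _ ≤ K * (b / 2) * g x := by gcongr; exact (hg_pos x hx).le
      _ = K * (b / 2 * g x) := mul_assoc ..
      _ ≤ K * (g' x + b * g x) := by gcongr
      _ = K * g' x + b * (K * g x) := by ring
  · exact (div_le_iff₀ (hg_pos s₀ le_rfl)).1 (le_max_right _ _)

end DampedEquation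

section InversePowers

lemma hasDerivAt_inv_pow (n : ℕ) {s : ℝ} (hs : s ≠ 0) :
    HasDerivAt (fun s : ℝ ↦ s⁻¹ ^ n) (-n * s⁻¹ ^ (n + 1)) s := by
  refine ((hasDerivAt_inv hs).pow n).congr_deriv ?_
  cases n with
  | zero => simp
  | succ n => rw [Nat.add_sub_cancel, ← inv_pow]; ring

lemma isLittleO_inv_pow_succ (n : ℕ) :
    (fun s : ℝ ↦ s⁻¹ ^ (n + 1)) =o[atTop] fun s ↦ s⁻¹ ^ n := by
  simpa only [pow_succ, mul_one] using (isBigO_refl (fun s : ℝ ↦ s⁻¹ ^ n) atTop).mul_isLittleO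
    ((isLittleO_one_iff ℝ).2 tendsto_inv_atTop_zero)

lemma rpow_neg_one_sub_natCast (n : ℕ) {s : ℝ} (hs : 0 ≤ s) :
    s ^ (-1 - (n : ℝ)) = s⁻¹ ^ (n + 1) := by
  rw [inv_pow, ← rpow_natCast, ← rpow_neg hs]
  push_cast
  ring_nf

variable {b : ℝ} {c d : ℕ → ℝ}

lemma hasDerivAt_sum_inv_pow (hc₀ : b * c 0 = d 0)
    (hc : ∀ n : ℕ, b * c (n + 1) = (n + 1) * c n + d (n + 1)) (N : ℕ) {s : ℝ} (hs : s ≠ 0) :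
    HasDerivAt (fun s : ℝ ↦ ∑ n ∈ Finset.range (N + 1), c n * s⁻¹ ^ (n + 1))
      (∑ n ∈ Finset.range (N + 1), d n * s⁻¹ ^ (n + 1) - (N + 1) * c N * s⁻¹ ^ (N + 2)
        - b * ∑ n ∈ Finset.range (N + 1), c n * s⁻¹ ^ (n + 1)) s := by
  induction N with
  | zero =>
    simp only [zero_add, Finset.sum_range_one]
    refine ((hasDerivAt_inv_pow 1 hs).const_mul (c 0)).congr_deriv ?_
    push_cast
    linear_combination s⁻¹ * hc₀
  | succ N ih =>
    simp only [Finset.sum_range_succ _ (N + 1)]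
    refine (ih.add ((hasDerivAt_inv_pow (N + 2) hs).const_mul (c (N + 1)))).congr_deriv ?_
    push_cast
    linear_combination s⁻¹ ^ (N + 2) * hc N

lemma isBigO_sub_sum_inv_pow_of_hasDerivAt (hb : 0 < b) {f y : ℝ → ℝ} {N : ℕ}
    (hy : ∀ᶠ s in atTop, HasDerivAt y (f s - b * y s) s)
    (hf : (fun s ↦ f s - ∑ n ∈ Finset.range (N + 1), d n * s⁻¹ ^ (n + 1))
      =O[atTop] fun s : ℝ ↦ s⁻¹ ^ (N + 2))
    (hc₀ : b * c 0 = d 0) (hc : ∀ n : ℕ, b * c (n + 1) = (n + 1) * c n + d (n + 1)) :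
    (fun s ↦ y s - ∑ n ∈ Finset.range (N + 1), c n * s⁻¹ ^ (n + 1))
      =O[atTop] fun s : ℝ ↦ s⁻¹ ^ (N + 2) := by
  have hresidual : (fun s ↦ f s - ∑ n ∈ Finset.range (N + 1), d n * s⁻¹ ^ (n + 1)
      + (N + 1) * c N * s⁻¹ ^ (N + 2)) =O[atTop] fun s : ℝ ↦ s⁻¹ ^ (N + 2) :=
    hf.add ((isBigO_refl _ _).const_mul_left _)
  refine isBigO_of_hasDerivAt_sub_smul hb ?_ ?_ ?_
    ((isLittleO_inv_pow_succ (N + 2)).const_mul_left (-(N + 2 : ℕ))) hresidual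
  · filter_upwards [hy, eventually_ne_atTop 0] with s hys hs
    refine (hys.sub (hasDerivAt_sum_inv_pow hc₀ hc N hs)).congr_deriv ?_
    rw [smul_eq_mul]
    ring
  · filter_upwards [eventually_ne_atTop 0] with s hs using hasDerivAt_inv_pow (N + 2) hs
  · filter_upwards [eventually_gt_atTop 0] with s hs
    positivity

end InversePowers

section DuhamelIntegral

/-- The Duhamel (variation of constants) integral of `f`: the solution of `y' = f - b y` on
`(0, ∞)` with initial value `y 0 = 0`. -/
noncomputable def duhamelIntegral (b : ℝ) (f : ℝ → ℝ) (s : ℝ) : ℝ :=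
  exp (-b * s) * ∫ v in (0 : ℝ)..s, exp (b * v) * f v

lemma hasDerivAt_duhamelIntegral (b : ℝ) {f : ℝ → ℝ} {s : ℝ}
    (hf : IntervalIntegrable f volume 0 s) (hfm : StronglyMeasurableAtFilter f (𝓝 s))
    (hfc : ContinuousAt f s) :
    HasDerivAt (duhamelIntegral b f) (f s - b * duhamelIntegral b f s) s := by
  have hexp : HasDerivAt (fun s ↦ exp (-b * s)) (exp (-b * s) * -b) s := by
    simpa using ((hasDerivAt_id s).const_mul (-b)).exp
  have hint : HasDerivAt (fun s ↦ ∫ v in (0 : ℝ)..s, exp (b * v) * f v) (exp (b * s) * f s) s := by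
    obtain ⟨U, hU, hfU⟩ := hfm
    have hexp_cont : Continuous fun v ↦ exp (b * v) := by fun_prop
    exact intervalIntegral.integral_hasDerivAt_right (hf.continuousOn_mul hexp_cont.continuousOn)
      ⟨U, hU, hexp_cont.aestronglyMeasurable.mul hfU⟩ (hexp_cont.continuousAt.mul hfc)
  have hcancel : exp (-b * s) * exp (b * s) = 1 := by rw [← exp_add]; simp
  refine (hexp.mul hint).congr_deriv ?_
  rw [duhamelIntegral]
  linear_combination f s * hcancel

end DuhamelIntegral

section StieltjesTransform

/-- The Stieltjes transform `v ↦ ∫ f(t) / (v + t) dt` of a function `f` on the half-line `(0, ∞)`,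
considered for `v > 0`. -/
noncomputable def stieltjesTransform (f : ℝ → ℝ) (v : ℝ) : ℝ :=
  ∫ t in Set.Ioi (0 : ℝ), f t * (v + t)⁻¹

lemma integral_Iic_mul_inv_sub (f : ℝ → ℝ) (v : ℝ) :
    ∫ u in Set.Iic (0 : ℝ), f (-u) * (v - u)⁻¹ = stieltjesTransform f v := by
  simpa only [stieltjesTransform, neg_zero, ← sub_eq_add_neg] using
    integral_comp_neg_Iic (0 : ℝ) fun t ↦ f t * (v + t)⁻¹

variable {f : ℝ → ℝ} {v θ : ℝ}

lemma inv_add_le_rpow_mul_rpow {t : ℝ} (hθ₀ : 0 ≤ θ) (hθ₁ : θ ≤ 1) (ht : 0 < t) (hv : 0 < v) :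
    (v + t)⁻¹ ≤ t ^ (θ - 1) * v ^ (-θ) :=
  calc (v + t)⁻¹ = (v + t) ^ (θ - 1) * (v + t) ^ (-θ) := by
        rw [← rpow_add (by positivity), ← rpow_neg_one]
        ring_nf
    _ ≤ t ^ (θ - 1) * v ^ (-θ) :=
        mul_le_mul (rpow_le_rpow_of_nonpos ht (by linarith) (by linarith))
          (rpow_le_rpow_of_nonpos hv (by linarith) (by linarith)) (by positivity) (by positivity)

-- `θ = 1` gives the decay at infinity, and `θ < 1` the integrability at `0`.
lemma norm_stieltjesTransform_le (hθ₀ : 0 ≤ θ) (hθ₁ : θ ≤ 1)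
    (hf : IntegrableOn (fun t ↦ t ^ (θ - 1) * f t) (Set.Ioi 0)) (hv : 0 < v) :
    ‖stieltjesTransform f v‖ ≤ (∫ t in Set.Ioi (0 : ℝ), ‖t ^ (θ - 1) * f t‖) * v ^ (-θ) := by
  rw [← integral_mul_const]
  refine norm_integral_le_of_norm_le (hf.norm.mul_const _) ?_
  filter_upwards [ae_restrict_mem measurableSet_Ioi] with t (ht : 0 < t)
  calc ‖f t * (v + t)⁻¹‖ = ‖f t‖ * (v + t)⁻¹ := by
        rw [norm_mul, norm_of_nonneg (r := (v + t)⁻¹) (by positivity)]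
    _ ≤ ‖f t‖ * (t ^ (θ - 1) * v ^ (-θ)) := by
        gcongr
        exact inv_add_le_rpow_mul_rpow hθ₀ hθ₁ ht hv
    _ = ‖t ^ (θ - 1) * f t‖ * v ^ (-θ) := by
        rw [norm_mul, norm_of_nonneg (r := t ^ (θ - 1)) (by positivity)]
        ring

lemma norm_mul_inv_add_le {v₀ t : ℝ} (hv₀ : 0 < v₀) (hv : v₀ ≤ v) (ht : 0 < t) :
    ‖f t * (v + t)⁻¹‖ ≤ ‖f t‖ * v₀⁻¹ := by
  rw [norm_mul, norm_inv, norm_of_nonneg (r := v + t) (by linarith)]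
  gcongr
  linarith

lemma aestronglyMeasurable_mul_inv_add (hf : IntegrableOn f (Set.Ioi 0)) (v : ℝ) :
    AEStronglyMeasurable (fun t ↦ f t * (v + t)⁻¹) (volume.restrict (Set.Ioi 0)) :=
  hf.aestronglyMeasurable.mul (by fun_prop : Measurable fun t ↦ (v + t)⁻¹).aestronglyMeasurable

lemma integrableOn_mul_inv_add (hf : IntegrableOn f (Set.Ioi 0)) (hv : 0 < v) :
    IntegrableOn (fun t ↦ f t * (v + t)⁻¹) (Set.Ioi 0) := by
  refine (hf.norm.mul_const v⁻¹).mono' (aestronglyMeasurable_mul_inv_add hf v) ?_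
  filter_upwards [ae_restrict_mem measurableSet_Ioi] with t ht
  exact norm_mul_inv_add_le hv le_rfl ht

lemma continuousOn_stieltjesTransform (hf : IntegrableOn f (Set.Ioi 0)) :
    ContinuousOn (stieltjesTransform f) (Set.Ioi 0) := by
  refine continuousOn_of_forall_continuousAt fun v (hv : 0 < v) ↦ ?_
  refine continuousAt_of_dominated (bound := fun t ↦ ‖f t‖ * (v / 2)⁻¹)
    (.of_forall (aestronglyMeasurable_mul_inv_add hf)) ?_ (hf.norm.mul_const _) ?_
  · filter_upwards [lt_mem_nhds (half_lt_self hv)] with x hx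
    filter_upwards [ae_restrict_mem measurableSet_Ioi] with t ht
    exact norm_mul_inv_add_le (half_pos hv) hx.le ht
  · filter_upwards [ae_restrict_mem measurableSet_Ioi] with t (ht : 0 < t)
    have : v + t ≠ 0 := by positivity
    fun_prop (disch := assumption)

lemma intervalIntegrable_stieltjesTransform (hθ₀ : 0 ≤ θ) (hθ₁ : θ < 1)
    (hf : IntegrableOn f (Set.Ioi 0))
    (hfθ : IntegrableOn (fun t ↦ t ^ (θ - 1) * f t) (Set.Ioi 0)) {s : ℝ} (hs : 0 ≤ s) :
    IntervalIntegrable (stieltjesTransform f) volume 0 s := by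
  have hrpow : IntervalIntegrable (fun v : ℝ ↦ v ^ (-θ)) volume 0 s :=
    intervalIntegral.intervalIntegrable_rpow' (by linarith)
  refine (hrpow.const_mul (∫ t in Set.Ioi (0 : ℝ), ‖t ^ (θ - 1) * f t‖)).mono_fun' ?_ ?_ <;>
    rw [Set.uIoc_of_le hs]
  · exact ((continuousOn_stieltjesTransform hf).mono Set.Ioc_subset_Ioi_self).aestronglyMeasurable
      measurableSet_Ioc
  · filter_upwards [ae_restrict_mem measurableSet_Ioc] with v hv
    exact norm_stieltjesTransform_le hθ₀ hθ₁.le hfθ hv.1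

lemma hasDerivAt_duhamelIntegral_stieltjesTransform (b : ℝ) (hθ₀ : 0 ≤ θ) (hθ₁ : θ < 1)
    (hf : IntegrableOn f (Set.Ioi 0))
    (hfθ : IntegrableOn (fun t ↦ t ^ (θ - 1) * f t) (Set.Ioi 0)) {s : ℝ} (hs : 0 < s) :
    HasDerivAt (duhamelIntegral b (stieltjesTransform f))
      (stieltjesTransform f s - b * duhamelIntegral b (stieltjesTransform f) s) s :=
  have hcont := continuousOn_stieltjesTransform hf
  hasDerivAt_duhamelIntegral b (intervalIntegrable_stieltjesTransform hθ₀ hθ₁ hf hfθ hs.le)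
    (hcont.stronglyMeasurableAtFilter isOpen_Ioi s hs) (hcont.continuousAt (Ioi_mem_nhds hs))

lemma stieltjesTransform_eq_sub_mul_inv (hf : IntegrableOn f (Set.Ioi 0))
    (htf : IntegrableOn (fun t ↦ t * f t) (Set.Ioi 0)) (hv : 0 < v) :
    stieltjesTransform f v =
      ((∫ t in Set.Ioi (0 : ℝ), f t) - stieltjesTransform (fun t ↦ t * f t) v) * v⁻¹ := by
  have hsum : v * stieltjesTransform f v + stieltjesTransform (fun t ↦ t * f t) v =
      ∫ t in Set.Ioi (0 : ℝ), f t := by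
    rw [stieltjesTransform, stieltjesTransform, ← integral_const_mul,
      ← integral_add ((integrableOn_mul_inv_add hf hv).const_mul v)
        (integrableOn_mul_inv_add htf hv)]
    refine setIntegral_congr_fun measurableSet_Ioi fun t (ht : 0 < t) ↦ ?_
    field_simp
  rw [← hsum]
  field_simp
  ring

lemma isBigO_stieltjesTransform_sub_sum (N : ℕ)
    (hf : ∀ n ≤ N, IntegrableOn (fun t ↦ t ^ n * f t) (Set.Ioi 0)) :
    (fun v ↦ stieltjesTransform f v - ∑ n ∈ Finset.range N,
      (-1) ^ n * (∫ t in Set.Ioi (0 : ℝ), t ^ n * f t) * v⁻¹ ^ (n + 1))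
      =O[atTop] fun v : ℝ ↦ v⁻¹ ^ (N + 1) := by
  have hf₀ : IntegrableOn f (Set.Ioi 0) := by simpa using hf 0 N.zero_le
  induction N generalizing f with
  | zero =>
    refine IsBigO.of_bound (∫ t in Set.Ioi (0 : ℝ), ‖f t‖) ?_
    filter_upwards [eventually_gt_atTop 0] with v hv
    simpa [rpow_neg_one, abs_of_pos hv] using
      norm_stieltjesTransform_le zero_le_one le_rfl (by simpa using hf₀) hv
  | succ N ih =>
    have htf (n : ℕ) (hn : n ≤ N) : IntegrableOn (fun t ↦ t ^ n * (t * f t)) (Set.Ioi 0) := by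
      simpa only [pow_succ, mul_assoc] using hf (n + 1) (Nat.succ_le_succ hn)
    have htf₀ : IntegrableOn (fun t ↦ t * f t) (Set.Ioi 0) := by simpa using htf 0 N.zero_le
    refine ((ih htf htf₀).neg_left.mul (isBigO_refl (fun v : ℝ ↦ v⁻¹) atTop)).congr' ?_ ?_
    · filter_upwards [eventually_gt_atTop 0] with v hv
      have hshift : ∑ n ∈ Finset.range N,
          (-1) ^ (n + 1) * (∫ t in Set.Ioi (0 : ℝ), t ^ (n + 1) * f t) * v⁻¹ ^ (n + 1 + 1) =
          -(∑ n ∈ Finset.range N,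
            (-1) ^ n * (∫ t in Set.Ioi (0 : ℝ), t ^ n * (t * f t)) * v⁻¹ ^ (n + 1)) * v⁻¹ := by
        rw [← Finset.sum_neg_distrib, Finset.sum_mul]
        refine Finset.sum_congr rfl fun n _ ↦ ?_
        simp only [pow_succ _ n, pow_succ _ (n + 1), mul_assoc]
        ring
      rw [stieltjesTransform_eq_sub_mul_inv hf₀ htf₀ hv, Finset.sum_range_succ', hshift]
      simp only [pow_zero, one_mul, zero_add, pow_one]
      ring
    · exact .of_forall fun v ↦ (pow_succ ..).symm

end StieltjesTransform

section Exponential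

variable {a : ℝ}

lemma integrableOn_rpow_mul_exp_neg_mul (ha : 0 < a) {p : ℝ} (hp : -1 < p) :
    IntegrableOn (fun t : ℝ ↦ t ^ p * exp (-a * t)) (Set.Ioi 0) := by
  simpa only [rpow_one] using integrableOn_rpow_mul_exp_neg_mul_rpow hp one_pos ha

lemma integrableOn_pow_mul_exp_neg_mul (ha : 0 < a) (n : ℕ) :
    IntegrableOn (fun t : ℝ ↦ t ^ n * exp (-a * t)) (Set.Ioi 0) := by
  simpa only [rpow_natCast] using
    integrableOn_rpow_mul_exp_neg_mul ha (p := n) (by linarith [n.cast_nonneg (α := ℝ)])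

lemma integral_pow_mul_exp_neg_mul (ha : 0 < a) (n : ℕ) :
    ∫ t in Set.Ioi (0 : ℝ), t ^ n * exp (-a * t) = n.factorial / a ^ (n + 1) := by
  have h := integral_rpow_mul_exp_neg_mul_Ioi (a := n + 1) (by positivity) ha
  rw [Gamma_nat_eq_factorial] at h
  simp only [add_sub_cancel_right, rpow_natCast, ← neg_mul] at h
  rw [h, ← Nat.cast_add_one, rpow_natCast, one_div, inv_pow, inv_mul_eq_div]

/-- The coefficient of `s ^ (-1 - n)` in the expansion of the Duhamel integral, with damping `b`, of
the Stieltjes transform of `t ↦ exp (-a * t)`. -/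
noncomputable def duhamelStieltjesCoeff (a b : ℝ) (n : ℕ) : ℝ :=
  1 / (a + b) * (((-1) ^ n / b ^ (n + 1) + 1 / a ^ (n + 1)) * ((-1) ^ n * n.factorial))

variable {b : ℝ}

lemma duhamelStieltjesCoeff_zero (ha : 0 < a) (hb : 0 < b) :
    duhamelStieltjesCoeff a b 0 = 1 / (a * b) := by
  simp only [duhamelStieltjesCoeff, pow_zero, zero_add, pow_one, Nat.factorial_zero, Nat.cast_one]
  field_simp

lemma mul_duhamelStieltjesCoeff_succ (ha : 0 < a) (hb : 0 < b) (n : ℕ) :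
    b * duhamelStieltjesCoeff a b (n + 1) =
      (n + 1) * duhamelStieltjesCoeff a b n
        + (-1) ^ (n + 1) * ((n + 1).factorial / a ^ (n + 2)) := by
  have hab : a + b ≠ 0 := by positivity
  simp only [duhamelStieltjesCoeff, Nat.factorial_succ, Nat.cast_mul, Nat.cast_add_one, pow_succ]
  obtain h | h := neg_one_pow_eq_or ℝ n <;>
  · rw [h]
    field_simp
    ring

lemma isBigO_duhamelIntegral_sub_sum (ha : 0 < a) (hb : 0 < b) (N : ℕ) :
    (fun s ↦ duhamelIntegral b (stieltjesTransform fun t ↦ exp (-a * t)) s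
      - ∑ n ∈ Finset.range (N + 1), duhamelStieltjesCoeff a b n * s⁻¹ ^ (n + 1))
      =O[atTop] fun s : ℝ ↦ s⁻¹ ^ (N + 2) := by
  have hmoment := integrableOn_pow_mul_exp_neg_mul ha
  have hint : IntegrableOn (fun t ↦ exp (-a * t)) (Set.Ioi 0) := by simpa using hmoment 0
  refine isBigO_sub_sum_inv_pow_of_hasDerivAt hb ?_
    (isBigO_stieltjesTransform_sub_sum (N + 1) fun n _ ↦ hmoment n) ?_ fun n ↦ ?_
  · filter_upwards [eventually_gt_atTop 0] with s hs
    exact hasDerivAt_duhamelIntegral_stieltjesTransform b (θ := 1 / 2) (by norm_num) (by norm_num)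
      hint (integrableOn_rpow_mul_exp_neg_mul ha (by norm_num)) hs
  · rw [integral_pow_mul_exp_neg_mul ha, duhamelStieltjesCoeff_zero ha hb]
    simp only [pow_zero, Nat.factorial_zero, Nat.cast_one, zero_add, pow_one]
    field_simp
  · rw [integral_pow_mul_exp_neg_mul ha, mul_duhamelStieltjesCoeff_succ ha hb]

end Exponential

/-- Long-time asymptotic expansion of the (normalized) lagged cross-covariance in
the boundary case `H = H₁ + H₂ = 1`. -/
theorem stmt1
    (α1 α2 : ℝ) (hα1 : 0 < α1) (hα2 : 0 < α2)
    (J : ℝ → ℝ)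
    (hJ : ∀ s, J s = Real.exp (-α2 * s) *
      ∫ v in (0:ℝ)..s, Real.exp (α2 * v) *
        ∫ u in Set.Iic (0:ℝ), Real.exp (α1 * u) * (v - u)⁻¹)
    (N : ℕ) :
    (fun s : ℝ => J s - (1 / (α1 * α2)) * s⁻¹ -
      (1 / (α1 + α2)) *
        ∑ n ∈ Finset.Icc 1 N,
          ((-1 : ℝ) ^ n / α2 ^ (n + 1) + 1 / α1 ^ (n + 1)) *
            ((-1 : ℝ) ^ n * (n.factorial : ℝ)) * s ^ (-1 - (n : ℝ)))
      =O[atTop] fun s : ℝ => s ^ (-(N : ℝ) - 2) := by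
  have hJ_eq : J = duhamelIntegral α2 (stieltjesTransform fun t ↦ exp (-α1 * t)) := by
    ext s
    simp only [hJ, duhamelIntegral, ← integral_Iic_mul_inv_sub, neg_mul_neg]
  refine (isBigO_duhamelIntegral_sub_sum hα1 hα2 N).congr' ?_ ?_
  · filter_upwards [eventually_ge_atTop 0] with s hs
    rw [hJ_eq, sub_sub, Finset.sum_range_eq_add_Ico _ N.succ_pos, Nat.succ_eq_add_one,
      Finset.Ico_add_one_right_eq_Icc, duhamelStieltjesCoeff_zero hα1 hα2, Finset.mul_sum]
    simp only [duhamelStieltjesCoeff, rpow_neg_one_sub_natCast _ hs, mul_assoc, zero_add, pow_one]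
  · filter_upwards [eventually_ge_atTop 0] with s hs
    rw [← rpow_neg_one_sub_natCast (N + 1) hs]
    push_cast
    ring_nf
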